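/- Let D = (V, E; c; s, t) be a flow network in which every arc belongs to at least one s-t path, and let P and Q be two distinct s-t paths. Let u be the vertex where they diverge and v the vertex where they merge and never separate again, i.e., they share the initial subpath P_{su} = Q_{su} from s to u and the terminal subpath P_{vt} = Q_{vt} from v to t, the arcs of P and Q leaving u are distinct, and the arcs of P and Q entering v are distinct. If the flow game Γ_D is convex, then the subpaths P_{uv} and Q_{uv} share no internal vertex, and moreover the capacities satisfy c(P_{uv}) + c(Q_{uv}) ≤ c(a) for every arc a of the shared segments P_{su} and P_{vt} (equivalently, c(P_{uv}) + c(Q_{uv}) ≤ min{c(P_{su}), c(P_{vt})}, with the convention that c(P_{su}) = +∞ if u = s and c(P_{vt}) = +∞ if v = t). -/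

import Mathlib

open scoped Classical
open Finset

noncomputable section

/-- The arcs (consecutive vertex pairs) of a vertex list. -/
def arcsOf {V : Type*} [DecidableEq V] (vs : List V) : Finset (V × V) :=
  (vs.zip vs.tail).toFinset

/-- `vs` is the vertex list of a directed path from `a` to `b` using arcs of `E`,
with pairwise distinct vertices. -/
def IsPathList {V : Type*} (E : Finset (V × V)) (a b : V) (vs : List V) : Prop :=
  vs.Nodup ∧ vs.head? = some a ∧ vs.getLast? = some b ∧
    vs.Chain' (fun x y => (x, y) ∈ E)

/-- `P` is (the arc set of) an `s`-`t` path in the network with arc set `E`. -/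
def IsSTPath {V : Type*} [DecidableEq V] (E : Finset (V × V)) (s t : V)
    (P : Finset (V × V)) : Prop :=
  ∃ vs : List V, IsPathList E s t vs ∧ P = arcsOf vs

/-- The capacity of a path (arc set): the minimum capacity of its arcs. -/
def pathCap {V : Type*} (c : V × V → ℝ) (P : Finset (V × V)) : ℝ :=
  sInf (c '' (P : Set (V × V)))

/-- `e` is a bottleneck arc of some `s`-`t` path, i.e. `e ∈ B`. -/
def IsBottleneck {V : Type*} [DecidableEq V] (E : Finset (V × V)) (c : V × V → ℝ)
    (s t : V) (e : V × V) : Prop :=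
  ∃ P : Finset (V × V), IsSTPath E s t P ∧ e ∈ P ∧ c e = pathCap c P

/-- The finite set `𝒫` of all `s`-`t` paths (as arc sets). -/
def stPaths {V : Type*} [DecidableEq V] (E : Finset (V × V)) (s t : V) :
    Finset (Finset (V × V)) :=
  E.powerset.filter (fun P => IsSTPath E s t P)

/-- The value of a flow `f`: net flow out of the source `s`. -/
def flowValue {V : Type*} [DecidableEq V] (E : Finset (V × V)) (s : V)
    (f : V × V → ℝ) : ℝ :=
  ∑ e ∈ E.filter (fun e => e.1 = s), f e - ∑ e ∈ E.filter (fun e => e.2 = s), f e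

/-- `f` is a feasible flow on the coalition `S`. -/
def IsFeasibleFlow {V : Type*} [DecidableEq V] (E : Finset (V × V)) (c : V × V → ℝ)
    (s t : V) (S : Finset (V × V)) (f : V × V → ℝ) : Prop :=
  (∀ e ∈ E, 0 ≤ f e ∧ f e ≤ c e) ∧
  (∀ e, e ∉ S → f e = 0) ∧
  (∀ v, v ≠ s → v ≠ t →
    ∑ e ∈ E.filter (fun e => e.2 = v), f e = ∑ e ∈ E.filter (fun e => e.1 = v), f e)

/-- `γ` is the characteristic function of the flow game on `D = (V,E;c;s,t)`:
for each coalition `S ⊆ E`, `γ S` is the maximum value of a feasible flow on `S`. -/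
def IsFlowGame {V : Type*} [DecidableEq V] (E : Finset (V × V)) (c : V × V → ℝ)
    (s t : V) (γ : Finset (V × V) → ℝ) : Prop :=
  ∀ S : Finset (V × V), S ⊆ E →
    IsGreatest {x : ℝ | ∃ f, IsFeasibleFlow E c s t S f ∧ flowValue E s f = x} (γ S)

/-- The cooperative game `γ` with player set `E` is convex (supermodular). -/
def GameConvex {V : Type*} [DecidableEq V] (E : Finset (V × V))
    (γ : Finset (V × V) → ℝ) : Prop :=
  ∀ e ∈ E, ∀ S T : Finset (V × V), S ⊆ T → T ⊆ E.erase e →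
    γ (insert e S) - γ S ≤ γ (insert e T) - γ T

/-- The directed graph with arc set `E` contains a directed cycle. -/
def HasDirectedCycle {V : Type*} (E : Finset (V × V)) : Prop :=
  ∃ (v : V) (vs : List V), (v :: vs).Nodup ∧
    (v :: vs).Chain' (fun x y => (x, y) ∈ E) ∧
    ((v :: vs).getLast (List.cons_ne_nil v vs), v) ∈ E

/-!
For two distinct `s`-`t` paths `P` and `Q`, supermodularity gives
`γ P + γ Q ≤ γ (P ∪ Q) + γ (P ∩ Q)`. Here `c(P) ≤ γ P` and `c(Q) ≤ γ Q`, while `γ (P ∩ Q) ≤ 0`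
because the common arcs contain no `s`-`t` path. An arc `a` of a common initial or terminal segment
is by itself an `s`-`t` cut of `P ∪ Q`, so `c(P) + c(Q) ≤ c(a)`. As capacities are positive, the
bottleneck arcs of `P` and `Q` then lie on the middle segments, which is the capacity bound. If the
middle segments met at `w`, one could follow `Q` up to `w` and `P` afterwards; every arc of this
third path lies on an initial segment shared with `Q` or a terminal segment shared with `P`, so its
bottleneck would violate the bound.
-/

section Lists

variable {α : Type*}

theorem exists_first_divergence :
    ∀ {A B : List α}, A.head? = B.head? → ¬ A <+: B → ¬ B <+: A →
      ∃ l x y₁ m₁ y₂ m₂, A = l ++ x :: y₁ :: m₁ ∧ B = l ++ x :: y₂ :: m₂ ∧ y₁ ≠ y₂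
  | [], _, _, hAB, _ => absurd List.nil_prefix hAB
  | _ :: _, [], _, _, hBA => absurd List.nil_prefix hBA
  | [a], b :: B, hhead, hAB, _ => by simp_all
  | a :: a' :: A, [b], hhead, _, hBA => by simp_all
  | a :: a' :: A, b :: b' :: B, hhead, hAB, hBA => by
    obtain rfl : a = b := by simpa using hhead
    by_cases hab : a' = b'
    · rw [List.prefix_cons_inj] at hAB hBA
      obtain ⟨l, x, y₁, m₁, y₂, m₂, hA, hB, hy⟩ :=
        exists_first_divergence (by simpa using hab) hAB hBA
      exact ⟨a :: l, x, y₁, m₁, y₂, m₂, by rw [hA]; rfl, by rw [hB]; rfl, hy⟩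
    · exact ⟨[], a, a', A, b', B, rfl, rfl, hab⟩

theorem eq_of_prefix_of_getLast?_eq {A B : List α} (hAB : A <+: B) (hB : B.Nodup) {t : α}
    (hAt : A.getLast? = some t) (hBt : B.getLast? = some t) : A = B := by
  obtain ⟨m, rfl⟩ := hAB
  by_contra hne
  have hm : m ≠ [] := fun h => hne (by simp [h])
  rw [List.getLast?_append_of_ne_nil _ hm] at hBt
  exact List.disjoint_of_nodup_append hB (List.mem_of_getLast? hAt) (List.mem_of_getLast? hBt)

theorem exists_first_common_mem {l m : List α} (h : ¬ l.Disjoint m) :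
    ∃ p x q, l = p ++ x :: q ∧ x ∈ m ∧ p.Disjoint m := by
  have hsome : (l.find? (· ∈ m)).isSome := by
    simpa [List.Disjoint] using h
  obtain ⟨x, hx⟩ := Option.isSome_iff_exists.1 hsome
  obtain ⟨hxm, p, q, hl, hp⟩ := List.find?_eq_some_iff_append.1 hx
  exact ⟨p, x, q, hl, by simpa using hxm, fun z hz => by simpa using hp z hz⟩

end Lists

section Game

variable {V : Type*} [DecidableEq V] {E : Finset (V × V)} {γ : Finset (V × V) → ℝ}

theorem GameConvex.marginal_le_marginal (hconv : GameConvex E γ) {S T D : Finset (V × V)}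
    (hST : S ⊆ T) (hTD : T ∪ D ⊆ E) (hdisj : Disjoint T D) :
    γ (S ∪ D) - γ S ≤ γ (T ∪ D) - γ T := by
  induction D using Finset.induction_on with
  | empty => simp
  | insert e D heD ih =>
    rw [disjoint_insert_right] at hdisj
    rw [union_insert, insert_subset_iff] at hTD
    have he : e ∉ T ∪ D := by simp [heD, hdisj.1]
    have hstep := hconv e hTD.1 (S ∪ D) (T ∪ D) (union_subset_union_left hST)
      (subset_erase.2 ⟨hTD.2, he⟩)
    have := ih hTD.2 hdisj.2
    rw [union_insert, union_insert]
    linarith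

theorem GameConvex.add_le_union_add_inter (hconv : GameConvex E γ) {A B : Finset (V × V)}
    (hA : A ⊆ E) (hB : B ⊆ E) : γ A + γ B ≤ γ (A ∪ B) + γ (A ∩ B) := by
  have hmarginal := hconv.marginal_le_marginal (S := A ∩ B) (T := A) (D := B \ A)
    inter_subset_left (by simpa using union_subset hA hB) disjoint_sdiff
  have hB' : A ∩ B ∪ B \ A = B := by rw [inter_comm, union_comm, sdiff_union_inter]
  rw [hB', union_sdiff_self_eq_union] at hmarginal
  linarith

end Game

section Arcs

variable {V : Type*} [DecidableEq V]

theorem arcsOf_cons_cons (x y : V) (l : List V) :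
    arcsOf (x :: y :: l) = insert (x, y) (arcsOf (y :: l)) := by
  simp [arcsOf]

theorem arcsOf_append_cons : ∀ (l : List V) (x : V) (m : List V),
    arcsOf (l ++ x :: m) = arcsOf (l ++ [x]) ∪ arcsOf (x :: m)
  | [], x, m => by simp [arcsOf]
  | [a], x, m => by simp [arcsOf]
  | a :: b :: l, x, m => by
    have := arcsOf_append_cons (b :: l) x m
    simp only [List.cons_append, arcsOf_cons_cons] at this ⊢
    rw [this, insert_union]

theorem arcsOf_append_cons_append_cons (pre m post : List V) (u v : V) :
    arcsOf (pre ++ u :: m ++ v :: post) =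
      arcsOf (pre ++ [u]) ∪ arcsOf (u :: m ++ [v]) ∪ arcsOf (v :: post) := by
  rw [arcsOf_append_cons (pre ++ u :: m), List.append_assoc, List.cons_append, arcsOf_append_cons]

theorem mem_arcsOf_append_cons_cons (l : List V) (x y : V) (r : List V) :
    (x, y) ∈ arcsOf (l ++ x :: y :: r) := by
  simp [arcsOf_append_cons l x (y :: r), arcsOf_cons_cons]

theorem exists_append_of_mem_arcsOf {e : V × V} :
    ∀ {l : List V}, e ∈ arcsOf l → ∃ p r, l = p ++ e.1 :: e.2 :: r
  | [], he => by simp [arcsOf] at he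
  | [x], he => by simp [arcsOf] at he
  | x :: y :: l, he => by
    rw [arcsOf_cons_cons, mem_insert] at he
    rcases he with rfl | he
    · exact ⟨[], l, rfl⟩
    · obtain ⟨p, r, hl⟩ := exists_append_of_mem_arcsOf he
      exact ⟨x :: p, r, by rw [hl]; rfl⟩

theorem mem_of_mem_arcsOf {l : List V} {e : V × V} (he : e ∈ arcsOf l) : e.1 ∈ l ∧ e.2 ∈ l := by
  obtain ⟨p, r, rfl⟩ := exists_append_of_mem_arcsOf he
  simp

theorem arcsOf_subset_of_isChain {E : Finset (V × V)} {l : List V}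
    (hl : l.IsChain fun x y => (x, y) ∈ E) : arcsOf l ⊆ E := by
  intro e he
  obtain ⟨p, r, rfl⟩ := exists_append_of_mem_arcsOf he
  exact List.isChain_iff_forall_rel_of_append_cons_cons.1 hl rfl

theorem eq_of_mem_arcsOf_of_crosses {l r : List V} {x y : V} {e : V × V}
    (he : e ∈ arcsOf (l ++ x :: y :: r)) (htail : e.1 ∉ y :: r)
    (hhead : e.2 ∉ l ++ [x]) : e = (x, y) := by
  rw [arcsOf_append_cons, mem_union, arcsOf_cons_cons, mem_insert] at he
  rcases he with he | he | he
  · exact absurd (mem_of_mem_arcsOf he).2 hhead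
  · exact he
  · exact absurd (mem_of_mem_arcsOf he).1 htail

theorem sum_arcsOf_telescope {M : Type*} [AddCommGroup M] (φ : V → M) {b : V} :
    ∀ {l : List V} {a : V}, (a :: l).Nodup → (a :: l).getLast? = some b →
      ∑ e ∈ arcsOf (a :: l), (φ e.1 - φ e.2) = φ a - φ b
  | [], a, _, hlast => by
    obtain rfl : a = b := by simpa using hlast
    simp [arcsOf]
  | z :: l, a, hnodup, hlast => by
    have ha : (a, z) ∉ arcsOf (z :: l) := fun h =>
      (List.nodup_cons.1 hnodup).1 (mem_of_mem_arcsOf h).1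
    rw [arcsOf_cons_cons, sum_insert ha,
      sum_arcsOf_telescope φ (List.nodup_cons.1 hnodup).2 (by simpa using hlast),
      sub_add_sub_cancel]

end Arcs

section Capacity

variable {V : Type*} {c : V × V → ℝ}

theorem pathCap_le {P : Finset (V × V)} {e : V × V} (he : e ∈ P) : pathCap c P ≤ c e :=
  csInf_le (P.finite_toSet.image c).bddBelow ⟨e, he, rfl⟩

theorem exists_mem_eq_pathCap {P : Finset (V × V)} (hP : P.Nonempty) :
    ∃ e ∈ P, c e = pathCap c P :=
  (hP.to_set.image c).csInf_mem (P.finite_toSet.image c)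

theorem pathCap_le_pathCap_of_lt {P S : Finset (V × V)} (hP : P.Nonempty)
    (hlt : ∀ e ∈ P, e ∉ S → pathCap c P < c e) : pathCap c S ≤ pathCap c P := by
  obtain ⟨e, he, hce⟩ := exists_mem_eq_pathCap (c := c) hP
  have heS : e ∈ S := by
    by_contra heS
    exact (hlt e he heS).ne' hce
  exact (pathCap_le heS).trans_eq hce

end Capacity

section Paths

variable {V : Type*} {E : Finset (V × V)} {s t : V}

theorem IsPathList.source_mem_left {l r : List V} {x : V} (h : IsPathList E s t (l ++ x :: r)) :
    s ∈ l ++ [x] := by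
  have := h.2.1
  cases l <;> simp_all

theorem IsPathList.target_mem_right {l r : List V} {x : V} (h : IsPathList E s t (l ++ x :: r)) :
    t ∈ x :: r :=
  List.mem_of_getLast? ((List.getLast?_append_cons l x r).symm.trans h.2.2.1)

theorem IsPathList.exists_first_divergence {A B : List V} (hA : IsPathList E s t A)
    (hB : IsPathList E s t B) (hne : A ≠ B) :
    ∃ l x y₁ m₁ y₂ m₂, A = l ++ x :: y₁ :: m₁ ∧ B = l ++ x :: y₂ :: m₂ ∧ y₁ ≠ y₂ :=
  _root_.exists_first_divergence (hA.2.1.trans hB.2.1.symm)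
    (fun hAB => hne (eq_of_prefix_of_getLast?_eq hAB hB.1 hA.2.2.1 hB.2.2.1))
    (fun hBA => hne (eq_of_prefix_of_getLast?_eq hBA hA.1 hB.2.2.1 hA.2.2.1).symm)

theorem IsPathList.reroute {l₁ l₂ r₁ r₂ : List V} {w : V}
    (h₁ : IsPathList E s t (l₁ ++ w :: r₁)) (h₂ : IsPathList E s t (l₂ ++ w :: r₂))
    (hdisj : l₁.Disjoint r₂) : IsPathList E s t (l₁ ++ w :: r₂) := by
  obtain ⟨hnodup₁, hs₁, -, hchain₁⟩ := h₁
  obtain ⟨hnodup₂, -, ht₂, hchain₂⟩ := h₂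
  refine ⟨?_, ?_, ?_, ?_⟩
  · simp only [List.nodup_append', List.nodup_cons, List.disjoint_cons_right]
      at hnodup₁ hnodup₂ ⊢
    tauto
  · cases l₁ <;> simpa using hs₁
  · rwa [List.getLast?_append_cons] at ht₂ ⊢
  · exact List.isChain_split.2 ⟨(List.isChain_split.1 hchain₁).1, (List.isChain_split.1 hchain₂).2⟩

variable [DecidableEq V]

theorem IsPathList.arcsOf_subset {A : List V} (hA : IsPathList E s t A) : arcsOf A ⊆ E :=
  arcsOf_subset_of_isChain hA.2.2.2

theorem IsPathList.arcsOf_nonempty {A : List V} (hA : IsPathList E s t A) (hst : s ≠ t) :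
    (arcsOf A).Nonempty := by
  obtain ⟨-, hs, ht, -⟩ := hA
  match A with
  | [] => simp at hs
  | [x] => simp_all
  | x :: y :: l => exact ⟨_, mem_arcsOf_append_cons_cons [] x y l⟩

theorem IsPathList.pathCap_pos {c : V × V → ℝ} {A : List V} (hA : IsPathList E s t A)
    (hst : s ≠ t) (hc : ∀ e ∈ E, 0 < c e) : 0 < pathCap c (arcsOf A) := by
  obtain ⟨e, he, hce⟩ := exists_mem_eq_pathCap (c := c) (hA.arcsOf_nonempty hst)
  exact hce ▸ hc e (hA.arcsOf_subset he)

end Paths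

section Flows

variable {V : Type*} [DecidableEq V] {E : Finset (V × V)} {c : V × V → ℝ} {s t : V}
  {γ : Finset (V × V) → ℝ}

-- `flowValue E w f` is the net outflow of `f` at `w`, for any vertex `w`, not only the source.
theorem sum_flowValue (f : V × V → ℝ) (X : Finset V) :
    ∑ w ∈ X, flowValue E w f =
      ∑ e ∈ E, ((if e.1 ∈ X then f e else 0) - (if e.2 ∈ X then f e else 0)) := by
  simp only [flowValue, sum_filter, sum_sub_distrib]
  rw [sum_comm, sum_comm (s := X)]
  simp only [sum_ite_eq]

theorem IsPathList.flowValue_ite_mem_arcsOf {A : List V} (hA : IsPathList E s t A) (k : ℝ)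
    (w : V) :
    flowValue E w (fun e => if e ∈ arcsOf A then k else 0) =
      (if s = w then k else 0) - (if t = w then k else 0) := by
  have hsub := hA.arcsOf_subset
  obtain ⟨hnodup, hs, ht, -⟩ := hA
  obtain ⟨l, rfl⟩ := List.head?_eq_some_iff.1 hs
  rw [← sum_arcsOf_telescope (fun x => if x = w then k else 0) hnodup ht,
    ← sum_singleton (fun w => flowValue E w _) w, sum_flowValue, ← sum_subset hsub]
  · refine sum_congr rfl fun e he => ?_
    simp [he]
  · intro e _ he
    simp [he]

theorem IsFlowGame.pathCap_le (hγ : IsFlowGame E c s t γ) (hst : s ≠ t)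
    (hc : ∀ e ∈ E, 0 ≤ c e) {A : List V} (hA : IsPathList E s t A) :
    pathCap c (arcsOf A) ≤ γ (arcsOf A) := by
  set k := pathCap c (arcsOf A)
  have hk_nonneg : 0 ≤ k :=
    Real.sInf_nonneg (Set.forall_mem_image.2 fun e he => hc e (hA.arcsOf_subset he))
  refine (hγ _ hA.arcsOf_subset).2
    ⟨fun e => if e ∈ arcsOf A then k else 0, ⟨fun e he => ?_, fun e he => if_neg he, ?_⟩, ?_⟩
  · dsimp only
    split_ifs with heA
    · exact ⟨hk_nonneg, _root_.pathCap_le heA⟩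
    · exact ⟨le_rfl, hc e he⟩
  · intro w hws hwt
    have hnet := hA.flowValue_ite_mem_arcsOf k w
    rw [if_neg hws.symm, if_neg hwt.symm, sub_self] at hnet
    exact (sub_eq_zero.1 hnet).symm
  · rw [hA.flowValue_ite_mem_arcsOf, if_pos rfl, if_neg hst.symm, sub_zero]

theorem IsFlowGame.le_cut (hγ : IsFlowGame E c s t γ) {S : Finset (V × V)} (hS : S ⊆ E)
    {X : Finset V} (hs : s ∈ X) (ht : t ∉ X) :
    γ S ≤ ∑ e ∈ S with e.1 ∈ X ∧ e.2 ∉ X, c e := by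
  obtain ⟨f, ⟨hcap, hsupp, hcons⟩, hvalue⟩ := (hγ S hS).1
  have hnet : ∀ w ∈ X, w ≠ s → flowValue E w f = 0 := fun w hw hws =>
    sub_eq_zero.2 (hcons w hws (ne_of_mem_of_not_mem hw ht)).symm
  calc γ S = ∑ w ∈ X, flowValue E w f := by rw [sum_eq_single_of_mem s hs hnet, hvalue]
    _ = ∑ e ∈ E, ((if e.1 ∈ X then f e else 0) - (if e.2 ∈ X then f e else 0)) :=
      sum_flowValue f X
    _ = ∑ e ∈ S, ((if e.1 ∈ X then f e else 0) - (if e.2 ∈ X then f e else 0)) :=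
      (sum_subset hS fun e _ he => by simp [hsupp e he]).symm
    _ ≤ ∑ e ∈ S, if e.1 ∈ X ∧ e.2 ∉ X then c e else 0 := sum_le_sum fun e he => by
      have := hcap e (hS he)
      grind
    _ = ∑ e ∈ S with e.1 ∈ X ∧ e.2 ∉ X, c e := (sum_filter _ _).symm

theorem IsFlowGame.inter_nonpos (hγ : IsFlowGame E c s t γ) {A B : List V}
    (hA : IsPathList E s t A) (hB : IsPathList E s t B) (hne : A ≠ B) :
    γ (arcsOf A ∩ arcsOf B) ≤ 0 := by
  obtain ⟨l, x, y₁, m₁, y₂, m₂, rfl, rfl, hy⟩ := hA.exists_first_divergence hB hne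
  have hdisjA : (l ++ [x]).Disjoint (y₁ :: m₁) :=
    List.disjoint_of_nodup_append (by simpa using hA.1)
  have hdisjB : (l ++ [x]).Disjoint (y₂ :: m₂) :=
    List.disjoint_of_nodup_append (by simpa using hB.1)
  have ht : t ∈ y₁ :: m₁ := IsPathList.target_mem_right (l := l ++ [x]) (by simpa using hA)
  have hsub : arcsOf (l ++ x :: y₁ :: m₁) ∩ arcsOf (l ++ x :: y₂ :: m₂) ⊆ E :=
    inter_subset_left.trans hA.arcsOf_subset
  have hcut := hγ.le_cut hsub
    (List.mem_toFinset.2 hA.source_mem_left) (mt List.mem_toFinset.1 fun h => hdisjA h ht)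
  rwa [filter_false_of_mem, sum_empty] at hcut
  rintro e he ⟨htail, hhead⟩
  rw [List.mem_toFinset] at htail hhead
  have heA := eq_of_mem_arcsOf_of_crosses (mem_inter.1 he).1 (hdisjA htail) hhead
  have heB := eq_of_mem_arcsOf_of_crosses (mem_inter.1 he).2 (hdisjB htail) hhead
  exact hy (congrArg Prod.snd (heA.symm.trans heB))

theorem IsFlowGame.union_le (hγ : IsFlowGame E c s t γ) (hc : ∀ e ∈ E, 0 ≤ c e)
    {l₁ l₂ r₁ r₂ : List V} {x y : V} (h₁ : IsPathList E s t (l₁ ++ x :: y :: r₁))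
    (h₂ : IsPathList E s t (l₂ ++ x :: y :: r₂)) (h₁₂ : l₁.Disjoint r₂) (h₂₁ : l₂.Disjoint r₁) :
    γ (arcsOf (l₁ ++ x :: y :: r₁) ∪ arcsOf (l₂ ++ x :: y :: r₂)) ≤ c (x, y) := by
  let X : Finset V := (l₁ ++ [x]).toFinset ∪ (l₂ ++ [x]).toFinset
  have hX : ∀ z, z ∈ X ↔ z ∈ l₁ ++ [x] ∨ z ∈ l₂ ++ [x] := by
    simp only [X, mem_union, List.mem_toFinset, implies_true]
  have hsep : ∀ z ∈ X, z ∉ y :: r₁ ∧ z ∉ y :: r₂ := by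
    have hnodup₁ := h₁.1
    have hnodup₂ := h₂.1
    simp only [List.nodup_append', List.nodup_cons, List.Disjoint] at hnodup₁ hnodup₂ h₁₂ h₂₁
    grind
  have ht : t ∈ y :: r₁ := IsPathList.target_mem_right (l := l₁ ++ [x]) (by simpa using h₁)
  refine (hγ.le_cut (union_subset h₁.arcsOf_subset h₂.arcsOf_subset) (X := X)
    ((hX s).2 (.inl h₁.source_mem_left)) fun htX => (hsep t htX).1 ht).trans ?_
  refine (sum_le_sum_of_subset_of_nonneg (t := {(x, y)}) (fun e he => ?_) fun e he _ => ?_).trans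
    (sum_singleton c (x, y)).le
  · obtain ⟨he, htail, hhead⟩ := mem_filter.1 he
    rw [mem_singleton]
    rcases mem_union.1 he with he | he
    · exact eq_of_mem_arcsOf_of_crosses he (hsep _ htail).1 fun h => hhead ((hX _).2 (.inl h))
    · exact eq_of_mem_arcsOf_of_crosses he (hsep _ htail).2 fun h => hhead ((hX _).2 (.inr h))
  · rw [mem_singleton.1 he]
    exact hc _ (h₁.arcsOf_subset (mem_arcsOf_append_cons_cons ..))

end Flows

section ConvexFlowGame

variable {V : Type*} [DecidableEq V] {E : Finset (V × V)} {c : V × V → ℝ} {s t : V}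
  {γ : Finset (V × V) → ℝ}

theorem IsFlowGame.pathCap_add_pathCap_le_union (hγ : IsFlowGame E c s t γ)
    (hconv : GameConvex E γ) (hst : s ≠ t) (hc : ∀ e ∈ E, 0 ≤ c e) {A B : List V}
    (hA : IsPathList E s t A) (hB : IsPathList E s t B) (hne : A ≠ B) :
    pathCap c (arcsOf A) + pathCap c (arcsOf B) ≤ γ (arcsOf A ∪ arcsOf B) :=
  calc pathCap c (arcsOf A) + pathCap c (arcsOf B)
      ≤ γ (arcsOf A) + γ (arcsOf B) :=
        add_le_add (hγ.pathCap_le hst hc hA) (hγ.pathCap_le hst hc hB)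
    _ ≤ γ (arcsOf A ∪ arcsOf B) + γ (arcsOf A ∩ arcsOf B) :=
      hconv.add_le_union_add_inter hA.arcsOf_subset hB.arcsOf_subset
    _ ≤ γ (arcsOf A ∪ arcsOf B) := add_le_of_nonpos_right (hγ.inter_nonpos hA hB hne)

theorem IsFlowGame.pathCap_add_pathCap_le_of_common_prefix (hγ : IsFlowGame E c s t γ)
    (hconv : GameConvex E γ) (hst : s ≠ t) (hc : ∀ e ∈ E, 0 ≤ c e) {l r₁ r₂ : List V} {w : V}
    (h₁ : IsPathList E s t (l ++ w :: r₁)) (h₂ : IsPathList E s t (l ++ w :: r₂)) (hne : r₁ ≠ r₂)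
    {e : V × V} (he : e ∈ arcsOf (l ++ [w])) :
    pathCap c (arcsOf (l ++ w :: r₁)) + pathCap c (arcsOf (l ++ w :: r₂)) ≤ c e := by
  refine (hγ.pathCap_add_pathCap_le_union hconv hst hc h₁ h₂ (by simpa using hne)).trans ?_
  obtain ⟨p, q, hpq⟩ := exists_append_of_mem_arcsOf he
  have hsplit : ∀ r, l ++ w :: r = p ++ e.1 :: e.2 :: (q ++ r) := fun r => by
    rw [List.append_cons, hpq]; simp
  rw [hsplit] at h₁ h₂
  rw [hsplit, hsplit]
  have hdisj : ∀ {r}, (p ++ e.1 :: e.2 :: r).Nodup → p.Disjoint r := fun h z hp hr =>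
    List.disjoint_of_nodup_append h hp (by simp [hr])
  exact hγ.union_le hc h₁ h₂ (hdisj h₂.1) (hdisj h₁.1)

theorem IsFlowGame.pathCap_add_pathCap_le_of_common_suffix (hγ : IsFlowGame E c s t γ)
    (hconv : GameConvex E γ) (hst : s ≠ t) (hc : ∀ e ∈ E, 0 ≤ c e) {l₁ l₂ r : List V} {w : V}
    (h₁ : IsPathList E s t (l₁ ++ w :: r)) (h₂ : IsPathList E s t (l₂ ++ w :: r)) (hne : l₁ ≠ l₂)
    {e : V × V} (he : e ∈ arcsOf (w :: r)) :
    pathCap c (arcsOf (l₁ ++ w :: r)) + pathCap c (arcsOf (l₂ ++ w :: r)) ≤ c e := by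
  refine (hγ.pathCap_add_pathCap_le_union hconv hst hc h₁ h₂ (by simpa using hne)).trans ?_
  obtain ⟨p, q, hpq⟩ := exists_append_of_mem_arcsOf he
  rw [hpq, ← List.append_assoc] at h₁ h₂
  rw [hpq, ← List.append_assoc, ← List.append_assoc]
  have hdisj : ∀ {l}, (l ++ e.1 :: e.2 :: q).Nodup → l.Disjoint q := fun h z hl hq =>
    List.disjoint_of_nodup_append h hl (by simp [hq])
  exact hγ.union_le hc h₁ h₂ (hdisj h₁.1) (hdisj h₂.1)

theorem IsFlowGame.eq_or_eq_of_isPathList_reroute (hγ : IsFlowGame E c s t γ)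
    (hconv : GameConvex E γ) (hst : s ≠ t) (hc : ∀ e ∈ E, 0 < c e) {l₁ l₂ r₁ r₂ : List V} {w : V}
    (h₁ : IsPathList E s t (l₁ ++ w :: r₁)) (h₂ : IsPathList E s t (l₂ ++ w :: r₂))
    (h₁₂ : IsPathList E s t (l₁ ++ w :: r₂)) : l₁ = l₂ ∨ r₁ = r₂ := by
  by_contra! hne
  have hc_nonneg : ∀ e ∈ E, 0 ≤ c e := fun e he => (hc e he).le
  obtain ⟨e, he, hce⟩ := exists_mem_eq_pathCap (c := c) (h₁₂.arcsOf_nonempty hst)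
  rw [arcsOf_append_cons, mem_union] at he
  rcases he with he | he
  · have hle := hγ.pathCap_add_pathCap_le_of_common_prefix hconv hst hc_nonneg h₁₂ h₁ hne.2.symm he
    linarith [h₁.pathCap_pos hst hc]
  · have hle := hγ.pathCap_add_pathCap_le_of_common_suffix hconv hst hc_nonneg h₁₂ h₂ hne.1 he
    linarith [h₂.pathCap_pos hst hc]

theorem IsFlowGame.disjoint_segments (hγ : IsFlowGame E c s t γ) (hconv : GameConvex E γ)
    (hst : s ≠ t) (hc : ∀ e ∈ E, 0 < c e) {u v : V} {pre m₁ m₂ post : List V}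
    (hP : IsPathList E s t (pre ++ u :: m₁ ++ v :: post))
    (hQ : IsPathList E s t (pre ++ u :: m₂ ++ v :: post))
    (hdiv : (m₁ ++ [v]).head? ≠ (m₂ ++ [v]).head?)
    (hmerge : (u :: m₁).getLast? ≠ (u :: m₂).getLast?) : m₂.Disjoint m₁ := by
  by_contra hmeet
  obtain ⟨q, w, q', rfl, hw, hq⟩ := exists_first_common_mem hmeet
  obtain ⟨p, p', rfl⟩ := List.append_of_mem hw
  have hsplit : ∀ m m', pre ++ u :: (m ++ w :: m') ++ v :: post =
      (pre ++ u :: m) ++ w :: (m' ++ v :: post) := by simp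
  rw [hsplit] at hP hQ
  have hdisj : (pre ++ u :: q).Disjoint (p' ++ v :: post) := by
    have hnodupP := hP.1
    have hnodupQ := hQ.1
    simp only [List.nodup_append', List.nodup_cons, List.disjoint_append_left,
      List.disjoint_append_right, List.disjoint_cons_left, List.disjoint_cons_right,
      List.mem_append, List.mem_cons, not_or] at hnodupP hnodupQ hq ⊢
    tauto
  rcases hγ.eq_or_eq_of_isPathList_reroute hconv hst hc hQ hP (hQ.reroute hP hdisj) with h | h
  · obtain rfl : q = p := by simpa using h
    exact hdiv (by cases q <;> simp)
  · obtain rfl : q' = p' := by simpa using h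
    exact hmerge (by simp only [← List.cons_append, List.getLast?_append_cons])

theorem IsFlowGame.pathCap_segment_add_le (hγ : IsFlowGame E c s t γ) (hconv : GameConvex E γ)
    (hst : s ≠ t) (hc : ∀ e ∈ E, 0 < c e) {u v : V} {pre m₁ m₂ post : List V}
    (hP : IsPathList E s t (pre ++ u :: m₁ ++ v :: post))
    (hQ : IsPathList E s t (pre ++ u :: m₂ ++ v :: post)) (hne : m₁ ≠ m₂) {a : V × V}
    (ha : a ∈ arcsOf (pre ++ [u]) ∪ arcsOf (v :: post)) :
    pathCap c (arcsOf (u :: m₁ ++ [v])) + pathCap c (arcsOf (u :: m₂ ++ [v])) ≤ c a := by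
  have hc_nonneg : ∀ e ∈ E, 0 ≤ c e := fun e he => (hc e he).le
  have hshared : ∀ e ∈ arcsOf (pre ++ [u]) ∪ arcsOf (v :: post),
      pathCap c (arcsOf (pre ++ u :: m₁ ++ v :: post)) +
        pathCap c (arcsOf (pre ++ u :: m₂ ++ v :: post)) ≤ c e := by
    intro e he
    rcases mem_union.1 he with he | he
    · simp only [List.append_assoc, List.cons_append] at hP hQ ⊢
      exact hγ.pathCap_add_pathCap_le_of_common_prefix hconv hst hc_nonneg hP hQ (by simpa) he
    · exact hγ.pathCap_add_pathCap_le_of_common_suffix hconv hst hc_nonneg hP hQ (by simpa) he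
  have hP_le := pathCap_le_pathCap_of_lt (c := c) (S := arcsOf (u :: m₁ ++ [v]))
    (hP.arcsOf_nonempty hst) fun e he heS => by
      rw [arcsOf_append_cons_append_cons] at he
      linarith [hQ.pathCap_pos hst hc, hshared e (by grind)]
  have hQ_le := pathCap_le_pathCap_of_lt (c := c) (S := arcsOf (u :: m₂ ++ [v]))
    (hQ.arcsOf_nonempty hst) fun e he heS => by
      rw [arcsOf_append_cons_append_cons] at he
      linarith [hP.pathCap_pos hst hc, hshared e (by grind)]
  linarith [hshared a ha]

end ConvexFlowGame

theorem disjoint_parallel_segments_general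
    {V : Type*} [DecidableEq V]
    (E : Finset (V × V)) (c : V × V → ℝ) (s t : V) (γ : Finset (V × V) → ℝ)
    (hst : s ≠ t) (hc : ∀ e ∈ E, 0 < c e)
    (hγ : IsFlowGame E c s t γ)
    (hconv : GameConvex E γ)
    (u v : V) (pre m₁ m₂ post : List V)
    (hP : IsPathList E s t (pre ++ u :: m₁ ++ v :: post))
    (hQ : IsPathList E s t (pre ++ u :: m₂ ++ v :: post))
    (hdiv : (m₁ ++ [v]).head? ≠ (m₂ ++ [v]).head?)
    (hmerge : (u :: m₁).getLast? ≠ (u :: m₂).getLast?) :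
    (∀ w ∈ m₁, w ∉ m₂) ∧
    (∀ a ∈ arcsOf (pre ++ [u]) ∪ arcsOf (v :: post),
      pathCap c (arcsOf (u :: m₁ ++ [v])) + pathCap c (arcsOf (u :: m₂ ++ [v])) ≤ c a) := by
  have hne : m₁ ≠ m₂ := by
    rintro rfl
    exact hdiv rfl
  exact ⟨fun _ hw₁ hw₂ => hγ.disjoint_segments hconv hst hc hP hQ hdiv hmerge hw₂ hw₁,
    fun _ => hγ.pathCap_segment_add_le hconv hst hc hP hQ hne⟩

/-- Disjoint parallel segments.  Let `P` and `Q` be distinct `s`-`t`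
paths sharing the initial subpath up to `u` and the terminal subpath from `v`, diverging
at `u` (distinct arcs leaving `u`) and merging at `v` (distinct arcs entering `v`).
If the flow game is convex, then the middle segments `P_{uv}` and `Q_{uv}` share no
internal vertex and `c(P_{uv}) + c(Q_{uv}) ≤ c(a)` for every arc `a` of the shared
initial and terminal segments. -/
theorem disjoint_parallel_segments
    {V : Type*} [Fintype V] [DecidableEq V]
    (E : Finset (V × V)) (c : V × V → ℝ) (s t : V) (γ : Finset (V × V) → ℝ)
    (hst : s ≠ t) (hc : ∀ e ∈ E, 0 < c e)
    (hγ : IsFlowGame E c s t γ)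
    (hcover : ∀ e ∈ E, ∃ P : Finset (V × V), IsSTPath E s t P ∧ e ∈ P)
    (hconv : GameConvex E γ)
    (u v : V) (pre m₁ m₂ post : List V)
    (hP : IsPathList E s t (pre ++ u :: m₁ ++ v :: post))
    (hQ : IsPathList E s t (pre ++ u :: m₂ ++ v :: post))
    (hdiv : (m₁ ++ [v]).head? ≠ (m₂ ++ [v]).head?)
    (hmerge : (u :: m₁).getLast? ≠ (u :: m₂).getLast?) :
    (∀ w ∈ m₁, w ∉ m₂) ∧
    (∀ a ∈ arcsOf (pre ++ [u]) ∪ arcsOf (v :: post),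
      pathCap c (arcsOf (u :: m₁ ++ [v])) + pathCap c (arcsOf (u :: m₂ ++ [v])) ≤ c a) := by
  exact disjoint_parallel_segments_general E c s t γ hst hc hγ hconv u v pre m₁ m₂ post hP hQ
    hdiv hmerge
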